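/- Let H be a separable real Hilbert space with orthonormal basis (e_i)_{i≥1}, and let z : H → ℝ be Fréchet differentiable, Lipschitz with constant L₀, and with Fréchet derivative Dz Lipschitz with constant L₁. Let ρ ∈ C_c^∞(ℝ) with support in [−1,1], ρ ≥ 0, ∫ρ = 1, and ρ_h(t) = h⁻¹ρ(t/h). Fix η > 0, set η_i = η·2^{−i}, and for k ≥ 1 define z^{η,k}(x) = ∫_{ℝ^k} z( Σ_{i≤k} y_i e_i + Σ_{i>k} ⟨x,e_i⟩ e_i ) ∏_{i=1}^k ρ_{η_i}(⟨x,e_i⟩ − y_i) dy₁…dy_k. Then: (a) z^{η,k} converges uniformly on H as k → ∞ to a function z^η which is Fréchet differentiable, L₀-Lipschitz, and with Dz^η Lipschitz with constant L₁; (b) sup_H |z^η − z| ≤ L₀ η and sup_H ‖Dz^η − Dz‖ ≤ L₁ η; (c) for every x ∈ H there exists a bounded self-adjoint operator A(x) on H with ‖A(x)‖ ≤ L₁ such that for all h, k ∈ H, lim_{t→0} t⁻¹ ⟨Dz^η(x + t k) − Dz^η(x), h⟩ = ⟨A(x)k, h⟩, and for fixed h, k the map x ↦ ⟨A(x)k,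 h⟩ is uniformly continuous on H. (Regularity part of the Lions-type partial convolution approximation, Lemma on z^η.) -/

import Mathlib

open Filter
open scoped RealInnerProductSpace Topology

noncomputable section

/-- The Lions-type partial convolution of `z : H → ℝ` along the first `k` basis
directions, with mollification parameters `η_i = η·2^{-i}` (`i = 1,…,k`, so the `i`-th
basis direction, `0`-based, uses `η/2^(i+1)`):
`z^{η,k}(x) = ∫_{ℝ^k} z( Σ_{i≤k} y_i e_i + Σ_{i>k} ⟨x,e_i⟩ e_i ) ∏_{i=1}^k ρ_{η_i}(⟨x,e_i⟩ - y_i) dy`,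
where the tail sum `Σ_{i>k} ⟨x,e_i⟩ e_i` is written as `x - Σ_{i≤k} ⟨x,e_i⟩ e_i`
(the basis being complete). -/
def partialConv {H : Type*} [NormedAddCommGroup H] [InnerProductSpace ℝ H]
    (e : ℕ → H) (ρ : ℝ → ℝ) (η : ℝ) (k : ℕ) (z : H → ℝ) (x : H) : ℝ :=
  ∫ y : Fin k → ℝ,
    z ((∑ i : Fin k, y i • e (i : ℕ)) + (x - ∑ i : Fin k, ⟪x, e (i : ℕ)⟫ • e (i : ℕ))) *
      ∏ i : Fin k,
        (η / 2 ^ ((i : ℕ) + 1))⁻¹ *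
          ρ ((⟪x, e (i : ℕ)⟫ - y i) / (η / 2 ^ ((i : ℕ) + 1)))

/-!
Substituting `y_i = ⟪x, e_i⟫ - η_i t_i` turns `z^{η,k}` into the expectation of `z(x - S_k)`, where
`S_k = ∑_{i ≤ k} η_i t_i e_i` and the `t_i` are independent with density `ρ`. As `|t_i| ≤ 1` almost
surely and `∑ η_i = η`, the random series `S = ∑ η_i t_i e_i` is bounded by `η` and is the uniform
limit of the `S_k`. Hence `z^η(x) = E z(x - S)` inherits the Lipschitz bounds of `z` and `Dz` and
stays within the asserted distances.

For fixed `h`, resampling only `t_i` exhibits `⟪Dz^η, h⟫` as a one-dimensional mollification along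
`e_i` of a Lipschitz function, so its difference quotients along `e_i` converge uniformly, to a
uniformly continuous limit. The directions with this property form a closed subspace, hence are all
of `H`. The limits are bounded and bilinear in `h` and the direction, and they are symmetric because
both are the limit of the same second difference quotient of `z^η`.
-/

open MeasureTheory Measure
open scoped NNReal

section DirectionalDerivatives

variable {H : Type*} [NormedAddCommGroup H] [NormedSpace ℝ H]

/-- The difference quotient of `F` at `x` with step `t` in the direction `k`. -/
def diffQuot (F : H → ℝ) (k : H) (t : ℝ) (x : H) : ℝ := t⁻¹ * (F (x + t • k) - F x)

/-- Uniform differentiability of `F` in the direction `k`: the difference quotients converge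
uniformly on the whole space, and the directional derivative is uniformly continuous. -/
def UnifDiffAlong (F : H → ℝ) (k : H) : Prop :=
  ∃ Q : H → ℝ, UniformContinuous Q ∧ TendstoUniformly (diffQuot F k) Q (𝓝[≠] 0)

variable {F F' Q : H → ℝ} {K : ℝ≥0} {k k' v : H}

lemma tendsto_norm_smul_nhdsNE_zero (k : H) : Tendsto (fun t : ℝ => ‖t • k‖) (𝓝[≠] 0) (𝓝 0) := by
  have hc : Continuous fun t : ℝ => ‖t • k‖ := by fun_prop
  simpa using (hc.tendsto 0).mono_left nhdsWithin_le_nhds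

lemma diffQuot_comm (F : H → ℝ) (h k : H) (t : ℝ) (x : H) :
    diffQuot (diffQuot F k t) h t x = diffQuot (diffQuot F h t) k t x := by
  simp only [diffQuot, add_right_comm x (t • h) (t • k)]
  ring

lemma diffQuot_add (F : H → ℝ) (k k' : H) (t : ℝ) (x : H) :
    diffQuot F (k + k') t x = diffQuot F k t (x + t • k') + diffQuot F k' t x := by
  simp only [diffQuot, smul_add, add_comm (t • k), ← add_assoc]
  ring

lemma diffQuot_smul (F : H → ℝ) (k : H) {c : ℝ} (hc : c ≠ 0) (t : ℝ) (x : H) :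
    diffQuot F (c • k) t x = c * diffQuot F k (t * c) x := by
  rcases eq_or_ne t 0 with rfl | ht
  · simp [diffQuot]
  · simp only [diffQuot, smul_smul]
    field_simp

lemma abs_diffQuot_sub_diffQuot_le (hF : LipschitzWith K F) (k k' : H) {t : ℝ} (ht : t ≠ 0)
    (x : H) : |diffQuot F k t x - diffQuot F k' t x| ≤ K * ‖k - k'‖ := by
  have hdist := hF.norm_sub_le (x + t • k) (x + t • k')
  rw [add_sub_add_left_eq_sub, ← smul_sub, norm_smul, Real.norm_eq_abs, Real.norm_eq_abs] at hdist
  rw [diffQuot, diffQuot, ← mul_sub, sub_sub_sub_cancel_right, abs_mul, abs_inv,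
    inv_mul_le_iff₀ (abs_pos.2 ht)]
  linarith

lemma abs_diffQuot_le (hF : LipschitzWith K F) (k : H) {t : ℝ} (ht : t ≠ 0) (x : H) :
    |diffQuot F k t x| ≤ K * ‖k‖ := by
  simpa [diffQuot] using abs_diffQuot_sub_diffQuot_le hF k 0 ht x

lemma uniformContinuous_diffQuot (hF : UniformContinuous F) (k : H) (t : ℝ) :
    UniformContinuous (diffQuot F k t) :=
  ((hF.comp (uniformContinuous_id.add uniformContinuous_const)).sub hF).const_mul' t⁻¹

lemma hasLineDerivAt_diffQuot (hF : ∀ x, HasLineDerivAt ℝ F (F' x) x v) (k : H) (t : ℝ) (x : H) :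
    HasLineDerivAt ℝ (diffQuot F k t) (diffQuot F' k t x) x v := by
  have hshift : HasDerivAt (fun s : ℝ => F (x + s • v + t • k)) (F' (x + t • k)) 0 := by
    simpa only [add_right_comm, HasLineDerivAt] using hF (x + t • k)
  exact (hshift.sub (hF x)).const_mul t⁻¹

lemma hasDerivAt_comp_line (hF : ∀ x, HasLineDerivAt ℝ F (F' x) x v) (x : H) (s : ℝ) :
    HasDerivAt (fun t : ℝ => F (x + t • v)) (F' (x + s • v)) s := by
  have hline := hF (x + s • v)
  rw [HasLineDerivAt, ← sub_self s] at hline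
  refine (hline.comp_sub_const s s).congr_of_eventuallyEq (.of_forall fun t => ?_)
  simp only [add_assoc, ← add_smul, add_sub_cancel]

lemma exists_diffQuot_eq (hF : ∀ x, HasLineDerivAt ℝ F (F' x) x v) {t : ℝ} (ht : t ≠ 0) (x : H) :
    ∃ y, dist y x ≤ ‖t • v‖ ∧ diffQuot F v t x = F' y := by
  have hderiv (θ : ℝ) :
      HasDerivAt (fun θ : ℝ => F (x + (θ * t) • v)) (F' (x + (θ * t) • v) * t) θ :=
    HasDerivAt.comp (h₂ := fun s => F (x + s • v)) θ (hasDerivAt_comp_line hF x (θ * t))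
      (hasDerivAt_mul_const t)
  obtain ⟨θ, ⟨hθ0, hθ1⟩, hslope⟩ := exists_hasDerivAt_eq_slope _ _ (zero_lt_one (α := ℝ))
    (fun θ _ => (hderiv θ).continuousAt.continuousWithinAt) (fun θ _ => hderiv θ)
  refine ⟨x + (θ * t) • v, ?_, ?_⟩
  · rw [dist_eq_norm, add_sub_cancel_left, mul_smul, norm_smul, Real.norm_eq_abs, abs_of_pos hθ0]
    exact mul_le_of_le_one_left (norm_nonneg _) hθ1.le
  · simp only [one_mul, zero_mul, zero_smul, add_zero, sub_zero, div_one] at hslope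
    rw [diffQuot, ← hslope, mul_comm (F' _), inv_mul_cancel_left₀ ht]

lemma tendstoUniformly_comp_add_smul {D : ℝ → H → ℝ} (hQ : UniformContinuous Q)
    (hD : TendstoUniformly D Q (𝓝[≠] 0)) (k : H) :
    TendstoUniformly (fun t x => D t (x + t • k)) Q (𝓝[≠] 0) := by
  rw [Metric.tendstoUniformly_iff] at hD ⊢
  intro ε hε
  obtain ⟨δ, hδ, hQδ⟩ := Metric.uniformContinuous_iff.1 hQ (ε / 2) (half_pos hε)
  filter_upwards [hD (ε / 2) (half_pos hε),
    (tendsto_norm_smul_nhdsNE_zero k).eventually_lt_const hδ] with t hDt ht x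
  have hshift : dist (Q x) (Q (x + t • k)) < ε / 2 := hQδ (by simpa [dist_eq_norm] using ht)
  linarith [dist_triangle (Q x) (Q (x + t • k)) (D t (x + t • k)), hDt (x + t • k)]

namespace UnifDiffAlong

lemma of_hasLineDerivAt (hF : ∀ x, HasLineDerivAt ℝ F (F' x) x v) (hF' : UniformContinuous F') :
    UnifDiffAlong F v := by
  refine ⟨F', hF', Metric.tendstoUniformly_iff.2 fun ε hε => ?_⟩
  obtain ⟨δ, hδ, hF'δ⟩ := Metric.uniformContinuous_iff.1 hF' ε hε
  filter_upwards [(tendsto_norm_smul_nhdsNE_zero v).eventually_lt_const hδ, self_mem_nhdsWithin]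
    with t ht ht0 x
  obtain ⟨y, hy, hquot⟩ := exists_diffQuot_eq hF ht0 x
  rw [hquot, dist_comm]
  exact hF'δ (hy.trans_lt ht)

protected lemma zero (F : H → ℝ) : UnifDiffAlong F 0 :=
  of_hasLineDerivAt (F' := 0) (fun _ => hasLineDerivAt_zero) uniformContinuous_const

protected lemma add (hk : UnifDiffAlong F k) (hk' : UnifDiffAlong F k') :
    UnifDiffAlong F (k + k') := by
  obtain ⟨Q, hQ, hlim⟩ := hk
  obtain ⟨Q', hQ', hlim'⟩ := hk'
  refine ⟨Q + Q', hQ.add hQ', ?_⟩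
  have hquot : diffQuot F (k + k') = (fun t x => diffQuot F k t (x + t • k')) + diffQuot F k' := by
    ext t x
    exact diffQuot_add F k k' t x
  rw [hquot]
  exact (tendstoUniformly_comp_add_smul hQ hlim k').add hlim'

protected lemma smul (c : ℝ) (hk : UnifDiffAlong F k) : UnifDiffAlong F (c • k) := by
  rcases eq_or_ne c 0 with rfl | hc
  · simpa only [zero_smul] using UnifDiffAlong.zero F
  obtain ⟨Q, hQ, hlim⟩ := hk
  have hmul : UniformContinuous fun r : ℝ => c * r := uniformContinuous_id.const_mul' c
  have hstep : Tendsto (fun t : ℝ => t * c) (𝓝[≠] 0) (𝓝[≠] 0) := by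
    refine tendsto_nhdsWithin_iff.2 ⟨?_, ?_⟩
    · simpa using ((continuous_mul_const c).tendsto 0).mono_left nhdsWithin_le_nhds
    · filter_upwards [self_mem_nhdsWithin] with t ht using mul_ne_zero ht hc
  refine ⟨fun x => c * Q x, hmul.comp hQ, ?_⟩
  have hlim' : TendstoUniformly (fun t => diffQuot F k (t * c)) Q (𝓝[≠] 0) :=
    fun u hu => hstep.eventually (hlim u hu)
  have hquot : diffQuot F (c • k) = fun t x => c * diffQuot F k (t * c) x := by
    ext t x
    exact diffQuot_smul F k hc t x
  rw [hquot]
  exact hmul.comp_tendstoUniformly hlim'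

end UnifDiffAlong

lemma isClosed_setOf_unifDiffAlong (hF : LipschitzWith K F) : IsClosed {k | UnifDiffAlong F k} := by
  refine isClosed_of_closure_subset fun k hk => ?_
  have hcauchy : UniformCauchySeqOn (diffQuot F k) (𝓝[≠] 0) Set.univ := by
    intro u hu
    obtain ⟨ε, hε, hεu⟩ := Metric.mem_uniformity_dist.1 hu
    obtain ⟨k', ⟨Q, -, hlim⟩, hkk'⟩ :=
      Metric.mem_closure_iff.1 hk (ε / (4 * (K + 1))) (by positivity)
    have hsmall : K * ‖k - k'‖ < ε / 4 := by
      rw [dist_eq_norm, lt_div_iff₀ (by positivity)] at hkk'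
      nlinarith [norm_nonneg (k - k')]
    have hnear : ∀ᶠ t : ℝ in 𝓝[≠] 0, ∀ x, dist (diffQuot F k t x) (Q x) < ε / 2 := by
      filter_upwards [Metric.tendstoUniformly_iff.1 hlim (ε / 4) (by positivity),
        self_mem_nhdsWithin] with t ht ht0 x
      have hquot := abs_diffQuot_sub_diffQuot_le hF k k' ht0 x
      rw [← Real.dist_eq] at hquot
      linarith [ht x, dist_triangle_right (diffQuot F k t x) (Q x) (diffQuot F k' t x)]
    filter_upwards [hnear.prod_mk hnear] with p hp x _
    exact hεu (by linarith [hp.1 x, hp.2 x,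
      dist_triangle_right (diffQuot F k p.1 x) (diffQuot F k p.2 x) (Q x)])
  choose Q hQ using fun x => cauchy_map_iff_exists_tendsto.1 (hcauchy.cauchy_map (Set.mem_univ x))
  have hlim : TendstoUniformly (diffQuot F k) Q (𝓝[≠] 0) :=
    tendstoUniformlyOn_univ.1 (hcauchy.tendstoUniformlyOn_of_tendsto fun x _ => hQ x)
  exact ⟨Q, hlim.uniformContinuous (.of_forall (uniformContinuous_diffQuot hF.uniformContinuous k)),
    hlim⟩

/-- The directions along which `F` is uniformly differentiable, as a linear subspace. -/
def unifDiffDirections (F : H → ℝ) : Submodule ℝ H where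
  carrier := {k | UnifDiffAlong F k}
  zero_mem' := UnifDiffAlong.zero F
  add_mem' := UnifDiffAlong.add
  smul_mem' c _ := UnifDiffAlong.smul c

lemma unifDiffAlong_of_dense_span (hF : LipschitzWith K F) {s : Set H}
    (hs : ∀ k ∈ s, UnifDiffAlong F k) (hdense : (Submodule.span ℝ s).topologicalClosure = ⊤)
    (k : H) : UnifDiffAlong F k := by
  have hle : (Submodule.span ℝ s).topologicalClosure ≤ unifDiffDirections F :=
    Submodule.topologicalClosure_minimal _ (Submodule.span_le.2 hs)
      (isClosed_setOf_unifDiffAlong hF)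
  exact hle (hdense ▸ Submodule.mem_top)

lemma tendsto_diffQuot_diffQuot {h : H} (hF : ∀ x, HasLineDerivAt ℝ F (F' x) x h)
    (hQ : UniformContinuous Q) (hlim : TendstoUniformly (diffQuot F' k) Q (𝓝[≠] 0)) (x : H) :
    Tendsto (fun t => diffQuot (diffQuot F k t) h t x) (𝓝[≠] 0) (𝓝 (Q x)) := by
  have hmean (t : ℝ) : ∃ y, dist y x ≤ ‖t • h‖ ∧
      (t ≠ 0 → diffQuot (diffQuot F k t) h t x = diffQuot F' k t y) := by
    rcases eq_or_ne t 0 with rfl | ht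
    · exact ⟨x, by simp, fun h0 => absurd rfl h0⟩
    · obtain ⟨y, hy, hquot⟩ := exists_diffQuot_eq (hasLineDerivAt_diffQuot hF k t) ht x
      exact ⟨y, hy, fun _ => hquot⟩
  choose y hyx hy using hmean
  have hylim : Tendsto y (𝓝[≠] 0) (𝓝 x) := tendsto_iff_dist_tendsto_zero.2
    (squeeze_zero (fun _ => dist_nonneg) hyx (tendsto_norm_smul_nhdsNE_zero h))
  refine (hlim.tendsto_comp hQ.continuous.continuousAt hylim).congr' ?_
  filter_upwards [self_mem_nhdsWithin] with t ht using (hy t ht).symm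

lemma second_directional_deriv_symm {h : H} {Fₕ Fₖ Qₕₖ Qₖₕ : H → ℝ}
    (hFₕ : ∀ x, HasLineDerivAt ℝ F (Fₕ x) x h) (hFₖ : ∀ x, HasLineDerivAt ℝ F (Fₖ x) x k)
    (hQₕₖ : UniformContinuous Qₕₖ) (hQₖₕ : UniformContinuous Qₖₕ)
    (hlimₕₖ : TendstoUniformly (diffQuot Fₕ k) Qₕₖ (𝓝[≠] 0))
    (hlimₖₕ : TendstoUniformly (diffQuot Fₖ h) Qₖₕ (𝓝[≠] 0)) : Qₕₖ = Qₖₕ := by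
  funext x
  refine tendsto_nhds_unique (tendsto_diffQuot_diffQuot hFₕ hQₕₖ hlimₕₖ x) ?_
  exact (tendsto_diffQuot_diffQuot hFₖ hQₖₕ hlimₖₕ x).congr fun t => diffQuot_comm F k h t x

end DirectionalDerivatives

section WeakHessian

variable {H : Type*} [NormedAddCommGroup H] [InnerProductSpace ℝ H]

lemma lipschitzWith_inner_right {G : H → H} {K : ℝ≥0} (hG : LipschitzWith K G) (h : H) :
    LipschitzWith (‖h‖₊ * K) fun x => ⟪G x, h⟫ := by
  have hinner : LipschitzWith ‖h‖₊ fun u : H => ⟪u, h⟫ := by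
    refine LipschitzWith.of_dist_le_mul fun u v => ?_
    rw [Real.dist_eq, ← inner_sub_left, dist_eq_norm, mul_comm]
    exact abs_real_inner_le_norm _ _
  exact hinner.comp hG

variable [CompleteSpace H]

lemma exists_clm_inner_eq (B : H →ₗ[ℝ] H →ₗ[ℝ] ℝ) {L : ℝ} (hL : 0 ≤ L)
    (hB : ∀ u v, |B u v| ≤ L * ‖u‖ * ‖v‖) :
    ∃ A : H →L[ℝ] H, ‖A‖ ≤ L ∧ ∀ u v, ⟪A u, v⟫ = B u v := by
  refine ⟨InnerProductSpace.continuousLinearMapOfBilin (B.mkContinuous₂ L hB), ?_, fun u v => ?_⟩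
  · refine ContinuousLinearMap.opNorm_le_of_re_inner_le hL fun u v hu hv => ?_
    simpa [hu, hv] using (le_abs_self _).trans (hB u v)
  · simp

lemma hasLineDerivAt_of_hasGradientAt {f : H → ℝ} {g x : H} (hf : HasGradientAt f g x) (v : H) :
    HasLineDerivAt ℝ f ⟪g, v⟫ x v := by
  simpa using hf.hasFDerivAt.hasLineDerivAt v

lemma exists_weakHessian {f : H → ℝ} {G : H → H} {L : ℝ≥0}
    (hf : ∀ x, HasGradientAt f (G x) x) (hG : LipschitzWith L G)
    (hdiff : ∀ h k, UnifDiffAlong (fun x => ⟪G x, h⟫) k) :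
    ∃ A : H → H →L[ℝ] H,
      (∀ x, (∀ u v, ⟪A x u, v⟫ = ⟪u, A x v⟫) ∧ ‖A x‖ ≤ L ∧
        ∀ h k, Tendsto (fun t : ℝ => t⁻¹ * ⟪G (x + t • k) - G x, h⟫) (𝓝[≠] 0) (𝓝 ⟪A x k, h⟫)) ∧
      ∀ h k, UniformContinuous fun x => ⟪A x k, h⟫ := by
  choose Q hQ hlim using hdiff
  have hpt (h k x : H) : Tendsto (fun t : ℝ => t⁻¹ * ⟪G (x + t • k) - G x, h⟫) (𝓝[≠] 0)
      (𝓝 (Q h k x)) := by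
    simpa only [diffQuot, inner_sub_left] using (hlim h k).tendsto_at x
  have hsymm (h k : H) : Q h k = Q k h :=
    second_directional_deriv_symm (fun x => hasLineDerivAt_of_hasGradientAt (hf x) h)
      (fun x => hasLineDerivAt_of_hasGradientAt (hf x) k) (hQ h k) (hQ k h) (hlim h k) (hlim k h)
  have hbound (h k x : H) : |Q h k x| ≤ L * ‖h‖ * ‖k‖ := by
    refine le_of_tendsto ((hlim h k).tendsto_at x).abs ?_
    filter_upwards [self_mem_nhdsWithin] with t ht
    simpa [mul_comm] using abs_diffQuot_le (lipschitzWith_inner_right hG h) k ht x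
  have hadd (h h' k x : H) : Q (h + h') k x = Q h k x + Q h' k x := by
    refine tendsto_nhds_unique (hpt (h + h') k x) (((hpt h k x).add (hpt h' k x)).congr fun t => ?_)
    rw [inner_add_right, mul_add]
  have hsmul (c : ℝ) (h k x : H) : Q (c • h) k x = c * Q h k x := by
    refine tendsto_nhds_unique (hpt (c • h) k x) (((hpt h k x).const_mul c).congr fun t => ?_)
    rw [real_inner_smul_right, mul_left_comm]
  let B (x : H) : H →ₗ[ℝ] H →ₗ[ℝ] ℝ := LinearMap.mk₂ ℝ (fun h k => Q h k x)
    (fun h h' k => hadd h h' k x) (fun c h k => hsmul c h k x)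
    (fun h k k' => by rw [hsymm, hadd, hsymm k, hsymm k'])
    (fun c h k => by rw [hsymm, hsmul, hsymm k, smul_eq_mul])
  choose A hAnorm hAB using fun x =>
    exists_clm_inner_eq (B x) L.coe_nonneg fun h k => hbound h k x
  have hA (x h k : H) : ⟪A x h, k⟫ = Q k h x := by rw [hAB, hsymm k]; rfl
  refine ⟨A, fun x => ⟨fun u v => ?_, hAnorm x, fun h k => ?_⟩, fun h k => ?_⟩
  · rw [hA, real_inner_comm, hA, hsymm]
  · simpa only [hA] using hpt h k x
  · simpa only [hA] using hQ h k

end WeakHessian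

section TranslateAverage

variable {Ω : Type*} [MeasurableSpace Ω] {H E : Type*} [NormedAddCommGroup H]
  [NormedAddCommGroup E] {P : Measure Ω} {S S' : Ω → H} {f : H → E} {K : ℝ≥0}

lemma aestronglyMeasurable_comp_sub (hS : AEStronglyMeasurable S P) (hf : Continuous f) (x : H) :
    AEStronglyMeasurable (fun ω => f (x - S ω)) P :=
  hf.comp_aestronglyMeasurable (aestronglyMeasurable_const.sub hS)

lemma integrable_comp_sub [IsFiniteMeasure P] (hS : Integrable S P) (hf : LipschitzWith K f)
    (x : H) : Integrable (fun ω => f (x - S ω)) P := by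
  refine ((integrable_const ‖f x‖).add (hS.norm.const_mul K)).mono'
    (aestronglyMeasurable_comp_sub hS.aestronglyMeasurable hf.continuous x)
    (.of_forall fun ω => ?_)
  have hdist := hf.norm_sub_le (x - S ω) x
  rw [sub_sub_cancel_left, norm_neg] at hdist
  exact (norm_le_norm_add_norm_sub' _ (f x)).trans (add_le_add_right hdist _)

variable [NormedSpace ℝ E]

/-- The average of the translates `f (· - S ω)` of `f` over a random shift `S` with parameter law
`P`; this is the convolution of `f` with the law of `S`. -/
def translateAvg (P : Measure Ω) (S : Ω → H) (f : H → E) (x : H) : E := ∫ ω, f (x - S ω) ∂P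

lemma norm_translateAvg_sub_translateAvg_le [IsProbabilityMeasure P] (hS : Integrable S P)
    (hS' : Integrable S' P) (hf : LipschitzWith K f) {x y : H} {d : ℝ}
    (hd : ∀ ω, ‖(x - S ω) - (y - S' ω)‖ ≤ d) :
    ‖translateAvg P S f x - translateAvg P S' f y‖ ≤ K * d := by
  rw [translateAvg, translateAvg,
    ← integral_sub (integrable_comp_sub hS hf x) (integrable_comp_sub hS' hf y)]
  refine (norm_integral_le_of_norm_le_const (C := K * d) (.of_forall fun ω => ?_)).trans (by simp)
  exact (hf.norm_sub_le _ _).trans (by gcongr; exact hd ω)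

lemma lipschitzWith_translateAvg [IsProbabilityMeasure P] (hS : Integrable S P)
    (hf : LipschitzWith K f) : LipschitzWith K (translateAvg P S f) :=
  lipschitzWith_iff_norm_sub_le.2 fun _ _ =>
    norm_translateAvg_sub_translateAvg_le hS hS hf fun _ => by rw [sub_sub_sub_cancel_right]

lemma norm_translateAvg_sub_self_le [CompleteSpace E] [IsProbabilityMeasure P] (hS : Integrable S P)
    (hf : LipschitzWith K f) {r : ℝ} (hr : ∀ ω, ‖S ω‖ ≤ r) (x : H) :
    ‖translateAvg P S f x - f x‖ ≤ K * r := by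
  have hzero : translateAvg P 0 f x = f x := by simp [translateAvg]
  rw [← hzero]
  exact norm_translateAvg_sub_translateAvg_le hS (integrable_zero _ _ _) hf (by simpa using hr)

lemma tendstoUniformly_translateAvg [IsProbabilityMeasure P] {ι : Type*} {l : Filter ι}
    {T : ι → Ω → H} (hT : ∀ i, Integrable (T i) P) (hS : Integrable S P) (hf : LipschitzWith K f)
    (hlim : TendstoUniformly T S l) :
    TendstoUniformly (fun i => translateAvg P (T i) f) (translateAvg P S f) l := by
  rw [Metric.tendstoUniformly_iff] at hlim ⊢
  intro ε hε
  filter_upwards [hlim (ε / (K + 1)) (by positivity)] with i hi x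
  have hd (ω : Ω) : ‖(x - S ω) - (x - T i ω)‖ ≤ ε / (K + 1) := by
    rw [sub_sub_sub_cancel_left, ← dist_eq_norm, dist_comm]
    exact (hi ω).le
  calc dist (translateAvg P S f x) (translateAvg P (T i) f x) ≤ K * (ε / (K + 1)) := by
        rw [dist_eq_norm]; exact norm_translateAvg_sub_translateAvg_le hS (hT i) hf hd
    _ < (K + 1) * (ε / (K + 1)) := by gcongr; linarith
    _ = ε := by field_simp

lemma translateAvg_comp_measurePreserving {Ω' : Type*} [MeasurableSpace Ω'] {Q : Measure Ω'}
    {φ : Ω' → Ω} (hφ : MeasurePreserving φ Q P) (hS : AEStronglyMeasurable S P)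
    (hf : Continuous f) (x : H) : translateAvg Q (S ∘ φ) f x = translateAvg P S f x := by
  simp only [translateAvg, Function.comp_apply]
  rw [← hφ.map_eq, integral_map hφ.aemeasurable
    (hφ.map_eq ▸ aestronglyMeasurable_comp_sub hS hf x)]

lemma translateAvg_prod_add {Ω' : Type*} [MeasurableSpace Ω'] {Q : Measure Ω'} {T : Ω' → H}
    [IsFiniteMeasure P] [IsFiniteMeasure Q] (hS : Integrable S P) (hT : Integrable T Q)
    (hf : LipschitzWith K f) (x : H) :
    translateAvg (P.prod Q) (fun p => S p.1 + T p.2) f x =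
      translateAvg Q T (translateAvg P S f) x := by
  have hST : Integrable (fun p : Ω × Ω' => S p.1 + T p.2) (P.prod Q) :=
    (hS.comp_fst Q).add (hT.comp_snd P)
  simp only [translateAvg]
  rw [integral_prod_symm _ (integrable_comp_sub hST hf x)]
  simp only [sub_add_eq_sub_sub_swap]

lemma hasFDerivAt_translateAvg [NormedSpace ℝ H] [IsFiniteMeasure P] {f' : H → H →L[ℝ] E}
    (hS : Integrable S P) (hf : LipschitzWith K f) (hf' : ∀ x, HasFDerivAt f (f' x) x)
    (hf'c : Continuous f') (x : H) :
    HasFDerivAt (translateAvg P S f) (translateAvg P S f' x) x := by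
  refine hasFDerivAt_integral_of_dominated_of_fderiv_le (bound := fun _ => (K : ℝ))
    (F' := fun y ω => f' (y - S ω)) univ_mem
    (.of_forall fun y => (integrable_comp_sub hS hf y).aestronglyMeasurable)
    (integrable_comp_sub hS hf x)
    (aestronglyMeasurable_comp_sub hS.aestronglyMeasurable hf'c x)
    (.of_forall fun ω y _ => (hf' _).le_of_lipschitz hf) (integrable_const _)
    (.of_forall fun ω y _ => (hasFDerivAt_comp_sub (S ω)).2 (hf' (y - S ω)))

end TranslateAverage

section TranslateAverageGradient

variable {Ω : Type*} [MeasurableSpace Ω] {H : Type*} [NormedAddCommGroup H]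
  [InnerProductSpace ℝ H] [CompleteSpace H] {P : Measure Ω} [IsFiniteMeasure P] {S : Ω → H}
  {G : H → H} {K : ℝ≥0}

lemma hasGradientAt_translateAvg {f : H → ℝ} (hS : Integrable S P) (hf : LipschitzWith K f)
    (hfG : ∀ x, HasGradientAt f (G x) x) (hG : Continuous G) (x : H) :
    HasGradientAt (translateAvg P S f) (translateAvg P S G x) x := by
  have hdual : InnerProductSpace.toDual ℝ H (translateAvg P S G x) =
      translateAvg P S (fun y => InnerProductSpace.toDual ℝ H (G y)) x :=
    ((InnerProductSpace.toDual ℝ H).toContinuousLinearEquiv.integral_comp_comm _).symm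
  rw [hasGradientAt_iff_hasFDerivAt, hdual]
  exact hasFDerivAt_translateAvg hS hf (fun y => (hfG y).hasFDerivAt)
    ((InnerProductSpace.toDual ℝ H).continuous.comp hG) x

lemma inner_translateAvg (hS : Integrable S P) (hG : LipschitzWith K G) (h x : H) :
    ⟪translateAvg P S G x, h⟫ = translateAvg P S (fun y => ⟪G y, h⟫) x := by
  simp only [real_inner_comm h]
  exact (integral_inner (integrable_comp_sub hS hG x) h).symm

end TranslateAverageGradient

section ProductMeasures

lemma integral_prod_inv_mul_comp_sub_div {ι : Type*} [Fintype ι] {a : ι → ℝ} (ha : ∀ i, 0 < a i)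
    (c : ι → ℝ) {f : (ι → ℝ) → ℝ} (hf : StronglyMeasurable f) :
    ∫ y : ι → ℝ, (∏ i, (a i)⁻¹) * f (fun i => (c i - y i) / a i) = ∫ t, f t := by
  classical
  have hdet : (Matrix.diagonal fun i => (a i)⁻¹).det = ∏ i, (a i)⁻¹ := Matrix.det_diagonal
  have hpos : 0 < ∏ i, (a i)⁻¹ := Finset.prod_pos fun i _ => inv_pos.2 (ha i)
  calc ∫ y : ι → ℝ, (∏ i, (a i)⁻¹) * f (fun i => (c i - y i) / a i)
      = ∫ y : ι → ℝ, (∏ i, (a i)⁻¹) * f (fun i => y i / a i) :=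
        integral_sub_left_eq_self (fun y : ι → ℝ => (∏ i, (a i)⁻¹) * f (fun i => y i / a i))
          volume c
    _ = (∏ i, (a i)⁻¹) * ∫ y, f (Matrix.toLin' (Matrix.diagonal fun i => (a i)⁻¹) y) := by
        rw [integral_const_mul]
        have hlin (y : ι → ℝ) : Matrix.toLin' (Matrix.diagonal fun i => (a i)⁻¹) y =
            fun i => y i / a i := by
          ext i
          rw [Matrix.toLin'_apply, Matrix.mulVec_diagonal, div_eq_inv_mul]
        simp only [hlin]
    _ = ∫ t, f t := by
        have hvol := Real.smul_map_diagonal_volume_pi (hdet.trans_ne hpos.ne')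
        conv_rhs => rw [← hvol]
        rw [integral_smul_measure, integral_map, hdet, abs_of_pos hpos,
          ENNReal.toReal_ofReal hpos.le, smul_eq_mul]
        · exact (LinearMap.continuous_of_finiteDimensional _).measurable.aemeasurable
        · exact hf.aestronglyMeasurable

/-- The measure on `ℝ` with Lebesgue density `ρ`; negative values of `ρ` are truncated to `0`. -/
def densityMeasure (ρ : ℝ → ℝ) : Measure ℝ := volume.withDensity fun t => ENNReal.ofReal (ρ t)

lemma densityMeasure_apply {ρ : ℝ → ℝ} (hρ : Integrable ρ) (hρ0 : ∀ t, 0 ≤ ρ t) {s : Set ℝ}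
    (hs : MeasurableSet s) : densityMeasure ρ s = ENNReal.ofReal (∫ t in s, ρ t) := by
  rw [densityMeasure, withDensity_apply _ hs,
    ofReal_integral_eq_lintegral_ofReal hρ.integrableOn (.of_forall hρ0)]

lemma isProbabilityMeasure_densityMeasure {ρ : ℝ → ℝ} (hρ0 : ∀ t, 0 ≤ ρ t)
    (hρ1 : ∫ t, ρ t = 1) : IsProbabilityMeasure (densityMeasure ρ) :=
  ⟨by rw [densityMeasure_apply (.of_integral_ne_zero (by simp [hρ1])) hρ0 .univ]; simp [hρ1]⟩

lemma integral_densityMeasure {E : Type*} [NormedAddCommGroup E] [NormedSpace ℝ E] {ρ : ℝ → ℝ}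
    (hρ : Measurable ρ) (hρ0 : ∀ t, 0 ≤ ρ t) (f : ℝ → E) :
    ∫ t, f t ∂densityMeasure ρ = ∫ t, ρ t • f t := by
  rw [densityMeasure, integral_withDensity_eq_integral_toReal_smul (by fun_prop) (by simp)]
  simp only [ENNReal.toReal_ofReal (hρ0 _)]

lemma pi_densityMeasure {ι : Type*} [Fintype ι] {ρ : ι → ℝ → ℝ} (hρ : ∀ i, Integrable (ρ i))
    (hρ0 : ∀ i t, 0 ≤ ρ i t) :
    Measure.pi (fun i => densityMeasure (ρ i)) =
      volume.withDensity fun t : ι → ℝ => ENNReal.ofReal (∏ i, ρ i (t i)) := by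
  have (i : ι) : SigmaFinite (densityMeasure (ρ i)) := by
    unfold densityMeasure; infer_instance
  refine pi_eq fun t ht => ?_
  rw [withDensity_apply _ (MeasurableSet.univ_pi ht), volume_pi, restrict_pi_pi,
    ← ofReal_integral_eq_lintegral_ofReal
      (Integrable.fintype_prod_dep fun i => (hρ i).integrableOn)
      (.of_forall fun y => Finset.prod_nonneg fun i _ => hρ0 i _),
    integral_fintype_prod_eq_prod,
    ENNReal.ofReal_prod_of_nonneg fun i _ => integral_nonneg (hρ0 i)]
  exact Finset.prod_congr rfl fun i _ => (densityMeasure_apply (hρ i) (hρ0 i) (ht i)).symm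

lemma integral_pi_densityMeasure {ι E : Type*} [Fintype ι] [NormedAddCommGroup E]
    [NormedSpace ℝ E] {ρ : ι → ℝ → ℝ} (hρm : ∀ i, Measurable (ρ i)) (hρ : ∀ i, Integrable (ρ i))
    (hρ0 : ∀ i t, 0 ≤ ρ i t) (f : (ι → ℝ) → E) :
    ∫ t, f t ∂Measure.pi (fun i => densityMeasure (ρ i)) = ∫ t, (∏ i, ρ i (t i)) • f t := by
  rw [pi_densityMeasure hρ hρ0,
    integral_withDensity_eq_integral_toReal_smul (by fun_prop) (by simp)]
  simp only [ENNReal.toReal_ofReal (Finset.prod_nonneg fun i _ => hρ0 i _)]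

lemma measurePreserving_infinitePi_comp {ι κ X : Type*} [Fintype κ] [MeasurableSpace X]
    (μ : Measure X) [IsProbabilityMeasure μ] {g : κ → ι} (hg : Function.Injective g) :
    MeasurePreserving (fun s : ι → X => s ∘ g) (infinitePi fun _ => μ)
      (Measure.pi fun _ => μ) :=
  ⟨by fun_prop, by rw [← infinitePi_eq_pi]; exact map_infinitePi_infinitePi_of_inj hg⟩

lemma measurePreserving_update_infinitePi {ι X : Type*} [DecidableEq ι] [MeasurableSpace X]
    (μ : Measure X) [IsProbabilityMeasure μ] (i : ι) :
    MeasurePreserving (fun p : (ι → X) × X => Function.update p.1 i p.2)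
      ((infinitePi fun _ => μ).prod μ) (infinitePi fun _ => μ) := by
  have hmeas : Measurable fun p : (ι → X) × X => Function.update p.1 i p.2 := by
    fun_prop
  refine ⟨hmeas, eq_infinitePi _ fun s t ht => ?_⟩
  have hpre : (fun p : (ι → X) × X => Function.update p.1 i p.2) ⁻¹' (s : Set ι).pi t =
      ((s.erase i : Finset ι) : Set ι).pi t ×ˢ {x | i ∈ s → x ∈ t i} := by
    ext p
    rw [Set.mem_preimage, Set.update_mem_pi_iff]
    simp
  rw [map_apply hmeas (.pi s.countable_toSet fun j _ => ht j), hpre, prod_prod,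
    infinitePi_pi _ fun j _ => ht j]
  by_cases hi : i ∈ s
  · simpa [hi] using Finset.prod_erase_mul s (fun j => μ (t j)) hi
  · simp [hi]

end ProductMeasures

section ClampSeries

/-- The projection of `ℝ` onto `[-1, 1]`. It turns a sequence of real samples into bounded
coefficients, and does not move samples from a density supported in `[-1, 1]`. -/
def clampUnit (t : ℝ) : ℝ := Set.projIcc (-1) 1 (by norm_num) t

@[fun_prop]
lemma continuous_clampUnit : Continuous clampUnit :=
  continuous_subtype_val.comp continuous_projIcc

lemma abs_clampUnit_le (t : ℝ) : |clampUnit t| ≤ 1 := abs_le.2 (Set.projIcc _ _ _ t).2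

lemma clampUnit_of_mem {t : ℝ} (ht : t ∈ Set.Icc (-1 : ℝ) 1) : clampUnit t = t :=
  congrArg Subtype.val (Set.projIcc_of_mem _ ht)

lemma summable_norm_update {ι E : Type*} [DecidableEq ι] [NormedAddCommGroup E] {v : ι → E}
    (hv : Summable (‖v ·‖)) (i : ι) (w : E) : Summable fun j => ‖Function.update v i w j‖ := by
  have hcomp : (fun j => ‖Function.update v i w j‖) = Function.update (‖v ·‖) i ‖w‖ :=
    Function.comp_update norm v i w
  exact hcomp ▸ hv.update i ‖w‖

variable {ι E : Type*} [NormedAddCommGroup E] [NormedSpace ℝ E]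

lemma norm_clampUnit_smul_le (t : ℝ) (v : E) : ‖clampUnit t • v‖ ≤ ‖v‖ := by
  rw [norm_smul]
  exact mul_le_of_le_one_left (norm_nonneg v) (abs_clampUnit_le t)

/-- The series with terms `v i` and coefficients `s i` clamped to `[-1, 1]`. Clamping makes it
converge for every sample `s` as soon as `∑ i, ‖v i‖` does. -/
def clampSeries (v : ι → E) (s : ι → ℝ) : E := ∑' i, clampUnit (s i) • v i

variable {v : ι → E}

lemma norm_clampSeries_le {b : ι → ℝ} {r : ℝ} (hb : HasSum b r) (hv : ∀ i, ‖v i‖ ≤ b i)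
    (s : ι → ℝ) : ‖clampSeries v s‖ ≤ r :=
  tsum_of_norm_bounded hb fun i => (norm_clampUnit_smul_le (s i) (v i)).trans (hv i)

variable [CompleteSpace E]

lemma continuous_clampSeries (hv : Summable (‖v ·‖)) : Continuous (clampSeries v) :=
  continuous_tsum (fun i => by fun_prop) hv fun i s => norm_clampUnit_smul_le (s i) (v i)

lemma integrable_clampSeries [Countable ι] (hv : Summable (‖v ·‖)) (P : Measure (ι → ℝ))
    [IsFiniteMeasure P] : Integrable (clampSeries v) P :=
  .of_bound (continuous_clampSeries hv).aestronglyMeasurable _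
    (.of_forall (norm_clampSeries_le hv.hasSum fun _ => le_rfl))

lemma clampSeries_update [DecidableEq ι] (hv : Summable (‖v ·‖)) (s : ι → ℝ) (i : ι) (t : ℝ) :
    clampSeries v (Function.update s i t) =
      clampSeries (Function.update v i 0) s + clampUnit t • v i := by
  have hsum : Summable fun j => clampUnit (Function.update s i t j) • v j :=
    .of_norm_bounded hv fun j => norm_clampUnit_smul_le _ _
  rw [clampSeries, hsum.tsum_eq_add_tsum_ite i, clampSeries, add_comm, Function.update_self]
  congr 1
  refine tsum_congr fun j => ?_
  rcases eq_or_ne j i with rfl | hj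
  · simp
  · simp [hj]

lemma translateAvg_clampSeries [Countable ι] [DecidableEq ι] {F : Type*} [NormedAddCommGroup F]
    [NormedSpace ℝ F] {f : E → F} {K : ℝ≥0} (hv : Summable (‖v ·‖)) (hf : LipschitzWith K f)
    (μ : Measure ℝ) [IsProbabilityMeasure μ] (i : ι) (x : E) :
    translateAvg (infinitePi fun _ => μ) (clampSeries v) f x =
      translateAvg μ (fun t => clampUnit t • v i)
        (translateAvg (infinitePi fun _ => μ) (clampSeries (Function.update v i 0)) f) x := by
  rw [← translateAvg_prod_add (integrable_clampSeries (summable_norm_update hv i 0) _)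
    (.of_bound (by fun_prop) _ (.of_forall fun t => norm_clampUnit_smul_le t (v i))) hf,
    ← translateAvg_comp_measurePreserving (measurePreserving_update_infinitePi μ i)
      (continuous_clampSeries hv).aestronglyMeasurable hf.continuous]
  simp only [Function.comp_def, clampSeries_update hv]

lemma tendstoUniformly_sum_clampSeries {v : ℕ → E} (hv : Summable (‖v ·‖)) :
    TendstoUniformly (fun k s => ∑ i ∈ Finset.range k, clampUnit (s i) • v i) (clampSeries v)
      atTop :=
  tendstoUniformly_tsum_nat hv fun i s => norm_clampUnit_smul_le (s i) (v i)

end ClampSeries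

section OneDimensionalMollification

lemma integrable_of_support_subset_Icc {ρ : ℝ → ℝ} {a b : ℝ} (hρ : Continuous ρ)
    (hρsupp : Function.support ρ ⊆ Set.Icc a b) : Integrable ρ :=
  hρ.integrable_of_hasCompactSupport (.of_support_subset_isCompact isCompact_Icc hρsupp)

variable {H : Type*} [NormedAddCommGroup H] [NormedSpace ℝ H] {ρ : ℝ → ℝ} {G : H → ℝ} {K : ℝ≥0}

lemma hasLineDerivAt_integral_mul_comp_sub_smul (hρ : ContDiff ℝ 1 ρ) (hρc : HasCompactSupport ρ)
    (hG : Continuous G) (x v : H) :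
    HasLineDerivAt ℝ (fun x => ∫ r, ρ r * G (x - r • v)) (∫ r, deriv ρ r * G (x - r • v)) x v := by
  have hconv (f : ℝ → ℝ) (t : ℝ) : convolution f (fun τ : ℝ => G (x + τ • v))
      (ContinuousLinearMap.mul ℝ ℝ) volume t = ∫ r, f r * G (x + t • v - r • v) := by
    simp only [convolution_def, ContinuousLinearMap.mul_apply', sub_smul, add_sub_assoc]
  have hline : Continuous fun τ : ℝ => G (x + τ • v) := by fun_prop
  have hderiv := hρc.hasDerivAt_convolution_left (ContinuousLinearMap.mul ℝ ℝ) hρ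
    (hline.locallyIntegrable (μ := volume)) 0
  rw [hconv, zero_smul, add_zero] at hderiv
  exact hderiv.congr_of_eventuallyEq (.of_forall fun t => (hconv ρ t).symm)

lemma lipschitzWith_integral_mul_comp_sub_smul {w : ℝ → ℝ} (hw : Continuous w)
    (hwc : HasCompactSupport w) (hG : LipschitzWith K G) (v : H) :
    LipschitzWith ((∫ r, ‖w r‖).toNNReal * K) fun x => ∫ r, w r * G (x - r • v) := by
  have hGc := hG.continuous
  have hinteg (x : H) : Integrable fun r => w r * G (x - r • v) :=
    Continuous.integrable_of_hasCompactSupport (by fun_prop) hwc.mul_right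
  refine lipschitzWith_iff_norm_sub_le.2 fun x y => ?_
  rw [← integral_sub (hinteg x) (hinteg y), NNReal.coe_mul,
    Real.coe_toNNReal _ (integral_nonneg fun _ => norm_nonneg _), mul_assoc, ← integral_mul_const]
  refine norm_integral_le_of_norm_le
    ((hw.integrable_of_hasCompactSupport hwc).norm.mul_const _) (.of_forall fun r => ?_)
  rw [← mul_sub, norm_mul]
  gcongr
  simpa using hG.norm_sub_le (x - r • v) (y - r • v)

lemma unifDiffAlong_integral_mul_comp_sub_smul (hρ : ContDiff ℝ 1 ρ) (hρc : HasCompactSupport ρ)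
    (hG : LipschitzWith K G) (v : H) :
    UnifDiffAlong (fun x => ∫ r, ρ r * G (x - r • v)) v :=
  .of_hasLineDerivAt
    (fun x => hasLineDerivAt_integral_mul_comp_sub_smul hρ hρc hG.continuous x v)
    (lipschitzWith_integral_mul_comp_sub_smul (hρ.continuous_deriv le_rfl) hρc.deriv hG v
      ).uniformContinuous

lemma translateAvg_densityMeasure_clampUnit_smul (hρ : Measurable ρ) (hρ0 : ∀ t, 0 ≤ ρ t)
    (hρsupp : Function.support ρ ⊆ Set.Icc (-1) 1) (G : H → ℝ) (v x : H) :
    translateAvg (densityMeasure ρ) (fun t => clampUnit t • v) G x =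
      ∫ t, ρ t * G (x - t • v) := by
  rw [translateAvg, integral_densityMeasure hρ hρ0]
  refine integral_congr_ae (.of_forall fun t => ?_)
  by_cases ht : ρ t = 0
  · simp [ht]
  · simp only [clampUnit_of_mem (hρsupp ht), smul_eq_mul]

lemma unifDiffAlong_translateAvg_clampSeries [CompleteSpace H] {ι : Type*} [Countable ι]
    {v : ι → H} (hv : Summable (‖v ·‖)) (hρ : ContDiff ℝ 1 ρ) (hρ0 : ∀ t, 0 ≤ ρ t)
    (hρsupp : Function.support ρ ⊆ Set.Icc (-1) 1) [IsProbabilityMeasure (densityMeasure ρ)]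
    (hG : LipschitzWith K G) (i : ι) :
    UnifDiffAlong
      (translateAvg (infinitePi fun _ : ι => densityMeasure ρ) (clampSeries v) G) (v i) := by
  classical
  have hv' : Summable fun j => ‖Function.update v i 0 j‖ := summable_norm_update hv i 0
  have hmoll : translateAvg (infinitePi fun _ : ι => densityMeasure ρ) (clampSeries v) G =
      fun x => ∫ t, ρ t * translateAvg (infinitePi fun _ : ι => densityMeasure ρ)
        (clampSeries (Function.update v i 0)) G (x - t • v i) :=
    funext fun x => (translateAvg_clampSeries hv hG (densityMeasure ρ) i x).trans
      (translateAvg_densityMeasure_clampUnit_smul hρ.continuous.measurable hρ0 hρsupp _ (v i) x)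
  rw [hmoll]
  exact unifDiffAlong_integral_mul_comp_sub_smul hρ
    (.of_support_subset_isCompact isCompact_Icc hρsupp)
    (lipschitzWith_translateAvg (integrable_clampSeries hv' _) hG) (v i)

end OneDimensionalMollification

section PartialConvolution

variable {H : Type*} [NormedAddCommGroup H] [InnerProductSpace ℝ H] {e : ℕ → H} {ρ : ℝ → ℝ}
  {η : ℝ} {z : H → ℝ}

/-- The vectors `η_i e_i`, `η_i = η / 2 ^ (i + 1)`, along which `partialConv` mollifies at unit
scale. -/
def scaledBasis (e : ℕ → H) (η : ℝ) (i : ℕ) : H := (η / 2 ^ (i + 1)) • e i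

lemma norm_scaledBasis_le (he : ∀ i, ‖e i‖ ≤ 1) (hη : 0 < η) (i : ℕ) :
    ‖scaledBasis e η i‖ ≤ η / 2 / 2 ^ i := by
  rw [scaledBasis, norm_smul, Real.norm_of_nonneg (by positivity), div_div, ← pow_succ']
  exact mul_le_of_le_one_right (by positivity) (he i)

lemma summable_norm_scaledBasis (he : ∀ i, ‖e i‖ ≤ 1) (hη : 0 < η) :
    Summable (‖scaledBasis e η ·‖) :=
  .of_nonneg_of_le (fun _ => norm_nonneg _) (norm_scaledBasis_le he hη)
    (hasSum_geometric_two' η).summable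

lemma partialConv_eq_integral_prod_mul (hρ : Continuous ρ) (hη : 0 < η) (hz : Continuous z)
    (k : ℕ) (x : H) :
    partialConv e ρ η k z x =
      ∫ t : Fin k → ℝ, (∏ i, ρ (t i)) * z (x - ∑ i, t i • scaledBasis e η i) := by
  have hpos (i : ℕ) : 0 < η / 2 ^ (i + 1) := by positivity
  have hcont : Continuous fun t : Fin k → ℝ =>
      (∏ i, ρ (t i)) * z (x - ∑ i, t i • scaledBasis e η i) := by fun_prop
  rw [partialConv, ← integral_prod_inv_mul_comp_sub_div (fun i : Fin k => hpos i)
    (fun i => ⟪x, e i⟫) hcont.stronglyMeasurable]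
  refine integral_congr_ae (.of_forall fun y => ?_)
  have hterm (i : Fin k) : ((⟪x, e i⟫ - y i) / (η / 2 ^ ((i : ℕ) + 1))) • scaledBasis e η i =
      ⟪x, e i⟫ • e i - y i • e i := by
    rw [scaledBasis, smul_smul, div_mul_cancel₀ _ (hpos i).ne', sub_smul]
  simp only [hterm, Finset.sum_sub_distrib, Finset.prod_mul_distrib]
  rw [mul_comm, mul_assoc, sub_sub_eq_add_sub, add_sub_assoc', add_comm x]

lemma partialConv_eq_translateAvg (hρ : Continuous ρ) (hρ0 : ∀ t, 0 ≤ ρ t)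
    (hρsupp : Function.support ρ ⊆ Set.Icc (-1) 1) [IsProbabilityMeasure (densityMeasure ρ)]
    (hη : 0 < η) (hz : Continuous z) (k : ℕ) (x : H) :
    partialConv e ρ η k z x =
      translateAvg (infinitePi fun _ : ℕ => densityMeasure ρ)
        (fun s => ∑ i ∈ Finset.range k, clampUnit (s i) • scaledBasis e η i) z x := by
  have hclamp : Continuous fun t : Fin k → ℝ => ∑ i, clampUnit (t i) • scaledBasis e η i := by
    fun_prop
  calc partialConv e ρ η k z x
      = ∫ t : Fin k → ℝ, (∏ i, ρ (t i)) * z (x - ∑ i, t i • scaledBasis e η i) :=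
        partialConv_eq_integral_prod_mul hρ hη hz k x
    _ = ∫ t : Fin k → ℝ, (∏ i, ρ (t i)) •
          z (x - ∑ i, clampUnit (t i) • scaledBasis e η i) := by
        refine integral_congr_ae (.of_forall fun t => ?_)
        by_cases ht : ∏ i, ρ (t i) = 0
        · simp [ht]
        · have hmem (i : Fin k) : t i ∈ Set.Icc (-1 : ℝ) 1 :=
            hρsupp (Finset.prod_ne_zero_iff.1 ht i (Finset.mem_univ i))
          simp only [clampUnit_of_mem (hmem _), smul_eq_mul]
    _ = translateAvg (Measure.pi fun _ : Fin k => densityMeasure ρ)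
          (fun t => ∑ i, clampUnit (t i) • scaledBasis e η i) z x :=
        (integral_pi_densityMeasure (fun _ => hρ.measurable)
          (fun _ => integrable_of_support_subset_Icc hρ hρsupp) (fun _ => hρ0) _).symm
    _ = _ := by
        rw [← translateAvg_comp_measurePreserving
          (measurePreserving_infinitePi_comp (densityMeasure ρ) Fin.val_injective)
          hclamp.aestronglyMeasurable hz]
        simp only [Function.comp_def, Finset.sum_range]

lemma tendstoUniformly_partialConv [CompleteSpace H] {K : ℝ≥0} (he : ∀ i, ‖e i‖ ≤ 1)
    (hρ : Continuous ρ) (hρ0 : ∀ t, 0 ≤ ρ t) (hρsupp : Function.support ρ ⊆ Set.Icc (-1) 1)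
    [IsProbabilityMeasure (densityMeasure ρ)] (hη : 0 < η) (hz : LipschitzWith K z) :
    TendstoUniformly (fun k => partialConv e ρ η k z)
      (translateAvg (infinitePi fun _ : ℕ => densityMeasure ρ)
        (clampSeries (scaledBasis e η)) z) atTop := by
  have hv := summable_norm_scaledBasis he hη
  have hpartial (k : ℕ) : partialConv e ρ η k z =
      translateAvg (infinitePi fun _ : ℕ => densityMeasure ρ)
        (fun s => ∑ i ∈ Finset.range k, clampUnit (s i) • scaledBasis e η i) z :=
    funext (partialConv_eq_translateAvg hρ hρ0 hρsupp hη hz.continuous k)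
  simp only [hpartial]
  exact tendstoUniformly_translateAvg
    (fun k => integrable_finsetSum _ fun i _ => .of_bound
      (Continuous.aestronglyMeasurable (by fun_prop)) _
      (.of_forall fun s => norm_clampUnit_smul_le (s i) _))
    (integrable_clampSeries hv _) hz (tendstoUniformly_sum_clampSeries hv)

lemma unifDiffAlong_translateAvg_scaledBasis [CompleteSpace H] {G : H → ℝ} {K : ℝ≥0}
    (he : ∀ i, ‖e i‖ ≤ 1) (hbasis : (Submodule.span ℝ (Set.range e)).topologicalClosure = ⊤)
    (hρ : ContDiff ℝ 1 ρ) (hρ0 : ∀ t, 0 ≤ ρ t) (hρsupp : Function.support ρ ⊆ Set.Icc (-1) 1)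
    [IsProbabilityMeasure (densityMeasure ρ)] (hη : 0 < η) (hG : LipschitzWith K G) (k : H) :
    UnifDiffAlong (translateAvg (infinitePi fun _ : ℕ => densityMeasure ρ)
      (clampSeries (scaledBasis e η)) G) k := by
  have hv := summable_norm_scaledBasis he hη
  refine unifDiffAlong_of_dense_span (lipschitzWith_translateAvg (integrable_clampSeries hv _) hG)
    (Set.forall_mem_range.2 fun i => ?_) hbasis k
  have hsmul : (η / 2 ^ (i + 1))⁻¹ • scaledBasis e η i = e i :=
    inv_smul_smul₀ (by positivity) (e i)
  exact hsmul ▸ (unifDiffAlong_translateAvg_clampSeries hv hρ hρ0 hρsupp hG i).smul _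

end PartialConvolution

theorem partialConv_regularity_general {H : Type*} [NormedAddCommGroup H]
    [InnerProductSpace ℝ H] [CompleteSpace H]
    (e : ℕ → H) (he : ∀ i, ‖e i‖ ≤ 1)
    (hbasis : (Submodule.span ℝ (Set.range e)).topologicalClosure = ⊤)
    (z : H → ℝ) (hzdiff : Differentiable ℝ z)
    (L₀ L₁ : ℝ) (hL₀ : 0 ≤ L₀) (hL₁ : 0 ≤ L₁)
    (hzlip : ∀ x y : H, |z x - z y| ≤ L₀ * ‖x - y‖)
    (hDzlip : ∀ x y : H, ‖gradient z x - gradient z y‖ ≤ L₁ * ‖x - y‖)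
    (ρ : ℝ → ℝ) (hρsm : ContDiff ℝ 1 ρ)
    (hρsupp : Function.support ρ ⊆ Set.Icc (-1 : ℝ) 1) (hρnn : ∀ t, 0 ≤ ρ t)
    (hρint : (∫ t, ρ t) = 1)
    (η : ℝ) (hη : 0 < η) :
    ∃ zη : H → ℝ,
      (∀ ε > (0 : ℝ), ∃ N : ℕ, ∀ k ≥ N, ∀ x : H, |partialConv e ρ η k z x - zη x| ≤ ε) ∧
      Differentiable ℝ zη ∧
      (∀ x y : H, |zη x - zη y| ≤ L₀ * ‖x - y‖) ∧
      (∀ x y : H, ‖gradient zη x - gradient zη y‖ ≤ L₁ * ‖x - y‖) ∧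
      (∀ x : H, |zη x - z x| ≤ L₀ * η) ∧
      (∀ x : H, ‖gradient zη x - gradient z x‖ ≤ L₁ * η) ∧
      ∃ A : H → H →L[ℝ] H,
        (∀ x : H,
          (∀ u v : H, ⟪A x u, v⟫ = ⟪u, A x v⟫) ∧
          ‖A x‖ ≤ L₁ ∧
          (∀ h k : H,
            Tendsto (fun t : ℝ => t⁻¹ * ⟪gradient zη (x + t • k) - gradient zη x, h⟫)
              (𝓝[≠] (0 : ℝ)) (𝓝 ⟪A x k, h⟫))) ∧
        (∀ h k : H, UniformContinuous fun x : H => ⟪A x k, h⟫) := by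
  lift L₀ to ℝ≥0 using hL₀
  lift L₁ to ℝ≥0 using hL₁
  have hz : LipschitzWith L₀ z := lipschitzWith_iff_norm_sub_le.2 hzlip
  have hDz : LipschitzWith L₁ (gradient z) := lipschitzWith_iff_norm_sub_le.2 hDzlip
  have := isProbabilityMeasure_densityMeasure hρnn hρint
  let P := infinitePi fun _ : ℕ => densityMeasure ρ
  let S : (ℕ → ℝ) → H := clampSeries (scaledBasis e η)
  have hS : Integrable S P := integrable_clampSeries (summable_norm_scaledBasis he hη) P
  have hSη : ∀ s, ‖S s‖ ≤ η :=
    norm_clampSeries_le (hasSum_geometric_two' η) (norm_scaledBasis_le he hη)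
  have hgrad : ∀ x, HasGradientAt (translateAvg P S z) (translateAvg P S (gradient z) x) x :=
    hasGradientAt_translateAvg hS hz (fun x => (hzdiff x).hasGradientAt) hDz.continuous
  have hDlip : LipschitzWith L₁ (translateAvg P S (gradient z)) := lipschitzWith_translateAvg hS hDz
  have hconv := Metric.tendstoUniformly_iff.1
    (tendstoUniformly_partialConv he hρsm.continuous hρnn hρsupp hη hz)
  have hdiff (h k : H) : UnifDiffAlong (fun x => ⟪translateAvg P S (gradient z) x, h⟫) k := by
    simp only [inner_translateAvg hS hDz]
    exact unifDiffAlong_translateAvg_scaledBasis he hbasis hρsm hρnn hρsupp hη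
      (lipschitzWith_inner_right hDz h) k
  refine ⟨translateAvg P S z, fun ε hε => ?_, fun x => (hgrad x).differentiableAt,
    (lipschitzWith_translateAvg hS hz).norm_sub_le, ?_⟩
  · obtain ⟨N, hN⟩ := eventually_atTop.1 (hconv ε hε)
    exact ⟨N, fun k hk x => by rw [← Real.dist_eq, dist_comm]; exact (hN k hk x).le⟩
  · simp only [(hgrad _).gradient]
    exact ⟨hDlip.norm_sub_le, norm_translateAvg_sub_self_le hS hz hSη,
      norm_translateAvg_sub_self_le hS hDz hSη, exists_weakHessian hgrad hDlip hdiff⟩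

/-- **Regularity of the Lions-type partial convolution approximation** (Lemma 6.2, the
regularity assertions for `z^η`). Let `H` be a separable real Hilbert space with
orthonormal basis `(e_i)`, and `z : H → ℝ` Fréchet differentiable, `L₀`-Lipschitz, with
`L₁`-Lipschitz gradient. Then the partial convolutions `z^{η,k}` converge uniformly to a
function `z^η` which is Fréchet differentiable, `L₀`-Lipschitz with `L₁`-Lipschitz
gradient; `sup|z^η - z| ≤ L₀η`, `sup‖Dz^η - Dz‖ ≤ L₁η`; and `z^η` has a weak second
order derivative: bounded self-adjoint operators `A(x)` with `‖A(x)‖ ≤ L₁`,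
`lim_{t→0} t⁻¹⟨Dz^η(x+tk) - Dz^η(x), h⟩ = ⟨A(x)k, h⟩`, and `x ↦ ⟨A(x)k, h⟩` uniformly
continuous. -/
theorem partialConv_regularity {H : Type*} [NormedAddCommGroup H]
    [InnerProductSpace ℝ H] [CompleteSpace H]
    (e : ℕ → H) (he : Orthonormal ℝ e)
    (hbasis : (Submodule.span ℝ (Set.range e)).topologicalClosure = ⊤)
    (z : H → ℝ) (hzdiff : Differentiable ℝ z)
    (L₀ L₁ : ℝ) (hL₀ : 0 ≤ L₀) (hL₁ : 0 ≤ L₁)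
    (hzlip : ∀ x y : H, |z x - z y| ≤ L₀ * ‖x - y‖)
    (hDzlip : ∀ x y : H, ‖gradient z x - gradient z y‖ ≤ L₁ * ‖x - y‖)
    (ρ : ℝ → ℝ) (hρsm : ContDiff ℝ (⊤ : ℕ∞) ρ)
    (hρsupp : Function.support ρ ⊆ Set.Icc (-1 : ℝ) 1) (hρnn : ∀ t, 0 ≤ ρ t)
    (hρint : (∫ t, ρ t) = 1)
    (η : ℝ) (hη : 0 < η) :
    ∃ zη : H → ℝ,
      -- (a) uniform convergence of `z^{η,k}` to `z^η` and regularity of `z^η`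
      (∀ ε > (0 : ℝ), ∃ N : ℕ, ∀ k ≥ N, ∀ x : H, |partialConv e ρ η k z x - zη x| ≤ ε) ∧
      Differentiable ℝ zη ∧
      (∀ x y : H, |zη x - zη y| ≤ L₀ * ‖x - y‖) ∧
      (∀ x y : H, ‖gradient zη x - gradient zη y‖ ≤ L₁ * ‖x - y‖) ∧
      -- (b) closeness to `z`
      (∀ x : H, |zη x - z x| ≤ L₀ * η) ∧
      (∀ x : H, ‖gradient zη x - gradient z x‖ ≤ L₁ * η) ∧
      -- (c) weak second order derivative
      ∃ A : H → H →L[ℝ] H,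
        (∀ x : H,
          (∀ u v : H, ⟪A x u, v⟫ = ⟪u, A x v⟫) ∧
          ‖A x‖ ≤ L₁ ∧
          (∀ h k : H,
            Tendsto (fun t : ℝ => t⁻¹ * ⟪gradient zη (x + t • k) - gradient zη x, h⟫)
              (𝓝[≠] (0 : ℝ)) (𝓝 ⟪A x k, h⟫))) ∧
        (∀ h k : H, UniformContinuous fun x : H => ⟪A x k, h⟫) :=
  partialConv_regularity_general e (fun i => (he.1 i).le) hbasis z hzdiff L₀ L₁ hL₀ hL₁ hzlip hDzlip
    ρ (hρsm.of_le (by simp)) hρsupp hρnn hρint η hη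

end
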